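/- Let D, D′ ⊂ ℝ^{2n+1} be bounded open sets and let F : cl(D) → cl(D′) be a smooth diffeomorphism onto cl(D′) whose restriction to D is a contact diffeomorphism onto D′. Then for every integer s ≥ 0 there exists a constant C > 0 such that for every smooth function f : cl(D′) → ℝ^m one has ‖f ∘ F‖_{D,s} ≤ C ‖f‖_{D′,s}. -/

import Mathlib

open MeasureTheory Bornology

noncomputable section

variable {E : Type*} [NormedAddCommGroup E] [NormedSpace ℝ E]

/-- The standard contact form `η₀ = dx^{2n+1} - Σ x^{n+j} dx^j` on `ℝ^{2n+1}`
(0-indexed coordinates): `η₀(x)(v) = v_{2n} - Σ_{j<n} x_{n+j} v_j`. -/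
def eta0 (n : ℕ) (x v : Fin (2*n+1) → ℝ) : ℝ :=
  v ⟨2*n, by omega⟩ -
    ∑ j : Fin n, x ⟨n + j, by have := j.2; omega⟩ * v ⟨j, by have := j.2; omega⟩

/-- `dη₀ = Σ_{j<n} dx^j ∧ dx^{n+j}`. -/
def dEta0 (n : ℕ) (u v : Fin (2*n+1) → ℝ) : ℝ :=
  ∑ j : Fin n,
    (u ⟨j, by have := j.2; omega⟩ * v ⟨n + j, by have := j.2; omega⟩ -
     u ⟨n + j, by have := j.2; omega⟩ * v ⟨j, by have := j.2; omega⟩)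

/-- The horizontal vector fields: for `j < n`, `X_j = ∂_j + x_{n+j} ∂_{2n}`;
for `n ≤ j < 2n`, `X_j = ∂_j` (0-indexed). -/
def Xvec (n : ℕ) (j : Fin (2*n)) (x : Fin (2*n+1) → ℝ) : Fin (2*n+1) → ℝ :=
  if h : (j : ℕ) < n then
    (Pi.single (⟨j, by omega⟩ : Fin (2*n+1)) 1 : Fin (2*n+1) → ℝ)
      + x ⟨n + j, by omega⟩ • (Pi.single (⟨2*n, by omega⟩ : Fin (2*n+1)) 1 : Fin (2*n+1) → ℝ)
  else
    (Pi.single (⟨j, by have := j.2; omega⟩ : Fin (2*n+1)) 1 : Fin (2*n+1) → ℝ)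

/-- The horizontal derivative `X_j f`. -/
def hDeriv (n : ℕ) (j : Fin (2*n)) (f : (Fin (2*n+1) → ℝ) → E)
    (x : Fin (2*n+1) → ℝ) : E :=
  fderiv ℝ f x (Xvec n j x)

/-- Iterated horizontal derivative `X_I f = X_{i₁} ⋯ X_{i_t} f`. -/
def XI (n : ℕ) : List (Fin (2*n)) → ((Fin (2*n+1) → ℝ) → E) → ((Fin (2*n+1) → ℝ) → E)
  | [], f => f
  | j :: I, f => hDeriv n j (XI n I f)

/-- Squared Folland–Stein norm `‖f‖_{D,s}² = Σ_{|I| ≤ s} ∫_D ‖X_I f‖²`. -/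
def fsNormSq (n : ℕ) (D : Set (Fin (2*n+1) → ℝ)) (s : ℕ)
    (f : (Fin (2*n+1) → ℝ) → E) : ℝ :=
  ∑ t ∈ Finset.range (s+1), ∑ I : Fin t → Fin (2*n),
    ∫ x in D, ‖XI n (List.ofFn I) f x‖^2

/-- The Folland–Stein norm `‖f‖_{D,s}`. -/
def fsNorm (n : ℕ) (D : Set (Fin (2*n+1) → ℝ)) (s : ℕ)
    (f : (Fin (2*n+1) → ℝ) → E) : ℝ :=
  Real.sqrt (fsNormSq n D s f)

/-- Ordinary partial derivative `∂_i f`. -/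
def pDeriv (n : ℕ) (i : Fin (2*n+1)) (f : (Fin (2*n+1) → ℝ) → E)
    (x : Fin (2*n+1) → ℝ) : E :=
  fderiv ℝ f x (Pi.single i 1 : Fin (2*n+1) → ℝ)

/-- Iterated ordinary partial derivative. -/
def pI (n : ℕ) : List (Fin (2*n+1)) → ((Fin (2*n+1) → ℝ) → E) → ((Fin (2*n+1) → ℝ) → E)
  | [], f => f
  | i :: I, f => pDeriv n i (pI n I f)

/-- The Reeb derivative `T₀ f = ∂_{2n} f` (0-indexed). -/
def T0Deriv (n : ℕ) (f : (Fin (2*n+1) → ℝ) → E) (x : Fin (2*n+1) → ℝ) : E :=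
  fderiv ℝ f x (Pi.single (⟨2*n, by omega⟩ : Fin (2*n+1)) 1 : Fin (2*n+1) → ℝ)

/-- `X` is a contact vector field on `D`:  `dη₀(X, X_j) + X_j(η₀(X)) = 0` for all
horizontal `X_j`. -/
def IsContactVF (n : ℕ) (D : Set (Fin (2*n+1) → ℝ))
    (X : (Fin (2*n+1) → ℝ) → (Fin (2*n+1) → ℝ)) : Prop :=
  ∀ j : Fin (2*n), ∀ x ∈ D,
    dEta0 n (X x) (Xvec n j x) + hDeriv n j (fun y => eta0 n y (X y)) x = 0

/-- The contact vector field with generating function `g`: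
`X_g = g T₀ + Σ_j (-(X_{n+j} g) X_j + (X_j g) X_{n+j})`. -/
def genVF (n : ℕ) (g : (Fin (2*n+1) → ℝ) → ℝ) (x : Fin (2*n+1) → ℝ) :
    Fin (2*n+1) → ℝ :=
  g x • (Pi.single (⟨2*n, by omega⟩ : Fin (2*n+1)) 1 : Fin (2*n+1) → ℝ)
  + ∑ j : Fin n,
      (-(hDeriv n (⟨n + j, by have := j.2; omega⟩ : Fin (2*n)) g x) •
          Xvec n (⟨j, by have := j.2; omega⟩ : Fin (2*n)) x
        + (hDeriv n (⟨j, by have := j.2; omega⟩ : Fin (2*n)) g x) •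
          Xvec n (⟨n + j, by have := j.2; omega⟩ : Fin (2*n)) x)

/-!
A contact map `F` sends horizontal vectors to horizontal vectors, so the chain rule involves
horizontal derivatives only: `X_j (f ∘ F) = ∑ i, a_ji • (X_i f) ∘ F`, where `a_ji` is the `i`-th
component of `X_j F`. The coefficients are bounded on `D` with all their derivatives, and the
change of variables `y = F x` costs at most the supremum of the Jacobian of `F⁻¹` on `D'`. As
`‖f‖²_{s+1} = ‖f‖²_{L²} + ∑ j, ‖X_j f‖²_s`, the estimate follows by induction on `s`, with constants
that do not depend on `f`.
-/

open Topology
open scoped NNReal ENNReal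

theorem enorm_sum_sq_le_card_mul {ι W : Type*} [SeminormedAddCommGroup W] (T : Finset ι)
    (v : ι → W) : ‖∑ i ∈ T, v i‖ₑ ^ 2 ≤ (T.card : ℝ≥0) * ∑ i ∈ T, ‖v i‖ₑ ^ 2 := by
  have hnn : ‖∑ i ∈ T, v i‖₊ ^ 2 ≤ T.card * ∑ i ∈ T, ‖v i‖₊ ^ 2 :=
    (pow_le_pow_left₀ zero_le (nnnorm_sum_le T v) 2).trans sq_sum_le_card_mul_sum_sq
  simpa only [enorm_eq_nnnorm] using mod_cast hnn

section Calculus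

variable {V W W' : Type*} [NormedAddCommGroup V] [NormedSpace ℝ V]
  [NormedAddCommGroup W] [NormedSpace ℝ W] [NormedAddCommGroup W'] [NormedSpace ℝ W']
  {k : ℕ} {D : Set V}

/-- `a` is of class `C^k` on `D` and its derivatives up to order `k` are bounded on `D`. It is meant
for open `D`, where `iteratedFDeriv` computes the derivatives of the restriction of `a`. -/
def ContDiffBddOn (k : ℕ) (a : V → W) (D : Set V) : Prop :=
  ContDiffOn ℝ k a D ∧ ∀ i ≤ k, IsBounded (iteratedFDeriv ℝ i a '' D)

namespace ContDiffBddOn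

theorem of_contDiffOn_closure [ProperSpace V] {a : V → W} (hD : IsOpen D) (hDb : IsBounded D)
    (ha : ContDiffOn ℝ k a (closure D)) : ContDiffBddOn k a D := by
  refine ⟨ha.mono subset_closure, fun i hi => ?_⟩
  suffices IsBounded (iteratedFDeriv ℝ i a '' (closure D ∩ D)) by
    rwa [Set.inter_eq_right.2 subset_closure] at this
  -- The Taylor series witnessing smoothness near a point of `closure D` are continuous up to the
  -- boundary and agree with the derivatives of `a` on `D`.
  refine hDb.isCompact_closure.induction_on
    (p := fun s => IsBounded (iteratedFDeriv ℝ i a '' (s ∩ D)))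
    (by simp) (fun s t hst ht => ht.subset (by gcongr)) (fun s t hs ht => ?_) fun x hx => ?_
  · rw [Set.union_inter_distrib_right, Set.image_union]
    exact hs.union ht
  obtain ⟨u, hu, p, hp⟩ := contDiffWithinAt_nat.1 (ha x hx)
  rw [Set.insert_eq_of_mem hx] at hu
  have hxu : x ∈ u := mem_of_mem_nhdsWithin hx hu
  have hbdd : ∀ᶠ y in 𝓝[u] x, ‖p y i‖ < ‖p x i‖ + 1 :=
    ((hp.cont i (by exact_mod_cast hi)) x hxu).norm.eventually (gt_mem_nhds (lt_add_one _))
  obtain ⟨O, hO, hxO, hOu⟩ := mem_nhdsWithin.1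
    (Filter.inter_mem hu (nhdsWithin_le_of_mem hu hbdd))
  refine ⟨O, mem_nhdsWithin_of_mem_nhds (hO.mem_nhds hxO),
    isBounded_iff_forall_norm_le.2 ⟨‖p x i‖ + 1, ?_⟩⟩
  rintro _ ⟨y, hy, rfl⟩
  have hOD : O ∩ D ⊆ O ∩ closure D := by gcongr; exact subset_closure
  have hopen : IsOpen (O ∩ D) := hO.inter hD
  have hpy : p y i = iteratedFDeriv ℝ i a y := by
    rw [← iteratedFDerivWithin_of_isOpen i hopen hy]
    exact (hp.mono (hOD.trans fun z hz => (hOu hz).1)).eq_iteratedFDerivWithin_of_uniqueDiffOn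
      (by exact_mod_cast hi) hopen.uniqueDiffOn hy
  exact hpy ▸ (hOu (hOD hy)).2.le

theorem of_le {l : ℕ} {a : V → W} (ha : ContDiffBddOn k a D) (hlk : l ≤ k) :
    ContDiffBddOn l a D :=
  ⟨ha.1.of_le (by exact_mod_cast hlk), fun i hi => ha.2 i (hi.trans hlk)⟩

theorem exists_norm_iteratedFDeriv_le {a : V → W} (ha : ContDiffBddOn k a D) {i : ℕ} (hi : i ≤ k) :
    ∃ C, ∀ x ∈ D, ‖iteratedFDeriv ℝ i a x‖ ≤ C := by
  simpa using isBounded_iff_forall_norm_le.1 (ha.2 i hi)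

theorem exists_enorm_le {a : V → W} (ha : ContDiffBddOn k a D) :
    ∃ C : ℝ≥0, ∀ x ∈ D, ‖a x‖ₑ ≤ C := by
  obtain ⟨C, hC⟩ := ha.exists_norm_iteratedFDeriv_le k.zero_le
  refine ⟨C.toNNReal, fun x hx => ?_⟩
  rw [enorm_le_coe, ← NNReal.coe_le_coe, coe_nnnorm, ← norm_iteratedFDeriv_zero (𝕜 := ℝ)]
  exact (hC x hx).trans (Real.le_coe_toNNReal C)

theorem fderiv {a : V → W} (hD : IsOpen D) (ha : ContDiffBddOn (k + 1) a D) :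
    ContDiffBddOn k (fderiv ℝ a) D := by
  refine ⟨ha.1.fderiv_of_isOpen hD (by simp), fun i hi => isBounded_iff_forall_norm_le.2 ?_⟩
  obtain ⟨C, hC⟩ := ha.exists_norm_iteratedFDeriv_le (Nat.succ_le_succ hi)
  exact ⟨C, Set.forall_mem_image.2 fun x hx => norm_iteratedFDeriv_fderiv.trans_le (hC x hx)⟩

theorem clm_apply {a : V → W →L[ℝ] W'} {b : V → W} (hD : IsOpen D) (ha : ContDiffBddOn k a D)
    (hb : ContDiffBddOn k b D) : ContDiffBddOn k (fun x => a x (b x)) D := by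
  refine ⟨ha.1.clm_apply hb.1, fun i hi => isBounded_iff_forall_norm_le.2 ?_⟩
  choose! A hA using fun l (hl : l ≤ k) => ha.exists_norm_iteratedFDeriv_le hl
  choose! B hB using fun l (hl : l ≤ k) => hb.exists_norm_iteratedFDeriv_le hl
  refine ⟨∑ l ∈ Finset.range (i + 1), i.choose l * A l * B (i - l),
    Set.forall_mem_image.2 fun x hx => ?_⟩
  have hle := norm_iteratedFDerivWithin_clm_apply ha.1 hb.1 hD.uniqueDiffOn hx
    (n := i) (by exact_mod_cast hi)
  simp only [iteratedFDerivWithin_of_isOpen _ hD hx] at hle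
  refine hle.trans (Finset.sum_le_sum fun l hl => ?_)
  have hlk : l ≤ k := (Finset.mem_range_succ_iff.1 hl).trans hi
  have hA0 : 0 ≤ A l := (norm_nonneg _).trans (hA l hlk x hx)
  gcongr
  · exact hA l hlk x hx
  · exact hB (i - l) ((i.sub_le l).trans hi) x hx

theorem continuousLinearMap_comp {a : V → W} (L : W →L[ℝ] W') (hD : IsOpen D)
    (ha : ContDiffBddOn k a D) : ContDiffBddOn k (fun x => L (a x)) D := by
  refine ⟨ha.1.continuousLinearMap_comp L, fun i hi => isBounded_iff_forall_norm_le.2 ?_⟩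
  obtain ⟨C, hC⟩ := ha.exists_norm_iteratedFDeriv_le hi
  refine ⟨‖L‖ * C, Set.forall_mem_image.2 fun x hx => ?_⟩
  refine (L.norm_iteratedFDeriv_comp_left (ha.1.contDiffAt (hD.mem_nhds hx))
    (by exact_mod_cast hi)).trans ?_
  gcongr
  exact hC x hx

theorem exists_setLIntegral_enorm_smul_sq_le [MeasurableSpace V] {a : V → ℝ}
    (ha : ContDiffBddOn k a D) (hD : MeasurableSet D) (μ : Measure V) :
    ∃ A : ℝ≥0, ∀ g : V → W,
      ∫⁻ x in D, ‖a x • g x‖ₑ ^ 2 ∂μ ≤ A * ∫⁻ x in D, ‖g x‖ₑ ^ 2 ∂μ := by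
  obtain ⟨A, hA⟩ := ha.exists_enorm_le
  refine ⟨A ^ 2, fun g => ?_⟩
  rw [← lintegral_const_mul' _ _ ENNReal.coe_ne_top]
  refine setLIntegral_mono' hD fun x hx => ?_
  rw [enorm_smul, mul_pow, ENNReal.coe_pow]
  gcongr
  exact hA x hx

theorem setLIntegral_enorm_sq_ne_top [MeasurableSpace V] {a : V → W} (ha : ContDiffBddOn k a D)
    {μ : Measure V} (hμ : μ D ≠ ∞) : ∫⁻ x in D, ‖a x‖ₑ ^ 2 ∂μ ≠ ∞ := by
  obtain ⟨A, hA⟩ := ha.exists_enorm_le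
  exact (setLIntegral_lt_top_of_le_nnreal hμ
    ⟨A ^ 2, fun x hx => by push_cast; gcongr; exact hA x hx⟩).ne

end ContDiffBddOn

theorem setLIntegral_image_le_mul_setLIntegral [FiniteDimensional ℝ V] [MeasurableSpace V]
    [BorelSpace V] (μ : Measure V) [μ.IsAddHaarMeasure] {s : Set V} (hs : MeasurableSet s)
    {G : V → V} {G' : V → V →L[ℝ] V} (hG : ∀ x ∈ s, HasFDerivWithinAt G (G' x) s x)
    (hinj : Set.InjOn G s) {M : ℝ≥0} (hM : ∀ x ∈ s, |(G' x).det| ≤ M) (g : V → ℝ≥0∞) :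
    ∫⁻ x in G '' s, g x ∂μ ≤ M * ∫⁻ x in s, g (G x) ∂μ := by
  rw [lintegral_image_eq_lintegral_abs_det_fderiv_mul μ hs hG hinj,
    ← lintegral_const_mul' _ _ ENNReal.coe_ne_top]
  refine setLIntegral_mono' hs fun x hx => ?_
  gcongr
  exact ENNReal.ofReal_le_of_le_toReal (hM x hx)

theorem exists_setLIntegral_comp_le [FiniteDimensional ℝ V] [MeasurableSpace V] [BorelSpace V]
    (μ : Measure V) [μ.IsAddHaarMeasure] {D' : Set V} (hD' : IsOpen D') (hD'b : IsBounded D')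
    {F G : V → V} (hF : Set.BijOn F D D') (hG : ContDiffOn ℝ 1 G (closure D'))
    (hGF : Set.LeftInvOn G F D) :
    ∃ M : ℝ≥0, ∀ g : V → ℝ≥0∞, ∫⁻ x in D, g (F x) ∂μ ≤ M * ∫⁻ y in D', g y ∂μ := by
  have : ProperSpace V := FiniteDimensional.proper ℝ V
  have : ProperSpace (V →L[ℝ] V) := FiniteDimensional.proper ℝ _
  have hG' : ContDiffBddOn 1 G D' := .of_contDiffOn_closure hD' hD'b (by exact_mod_cast hG)
  obtain ⟨K, hK⟩ := (hG'.fderiv hD').exists_norm_iteratedFDeriv_le le_rfl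
  simp only [norm_iteratedFDeriv_zero] at hK
  obtain ⟨M, hM⟩ := (isCompact_closedBall (0 : V →L[ℝ] V) K).exists_bound_of_continuousOn
    ContinuousLinearMap.continuous_det.continuousOn
  have hFG : Set.LeftInvOn F G D' := hF.image_eq ▸ hGF.rightInvOn_image
  have himage : G '' D' = D := by rw [← hF.image_eq, hGF.image_image]
  refine ⟨M.toNNReal, fun g => ?_⟩
  calc ∫⁻ x in D, g (F x) ∂μ = ∫⁻ x in G '' D', g (F x) ∂μ := by rw [himage]
    _ ≤ M.toNNReal * ∫⁻ y in D', g (F (G y)) ∂μ :=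
      setLIntegral_image_le_mul_setLIntegral μ hD'.measurableSet
        (fun y hy => ((hG'.1.differentiableOn (by simp)).differentiableAt
          (hD'.mem_nhds hy)).hasFDerivAt.hasFDerivWithinAt) hFG.injOn
        (fun y hy => (hM _ (by simpa using hK y hy)).trans (Real.le_coe_toNNReal M)) _
    _ = M.toNNReal * ∫⁻ y in D', g y ∂μ := by
      rw [setLIntegral_congr_fun hD'.measurableSet fun y hy => by rw [hFG hy]]

end Calculus

section HorizontalFrame

variable {n : ℕ}

theorem Xvec_eq (i : Fin (2 * n)) (y : Fin (2 * n + 1) → ℝ) :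
    Xvec n i y = Pi.single i.castSucc 1 +
      (if h : (i : ℕ) < n then y ⟨n + i, by omega⟩ else 0) • Pi.single (Fin.last (2 * n)) 1 := by
  unfold Xvec
  split_ifs with h
  · rfl
  · rw [zero_smul, add_zero]
    rfl

theorem Xvec_last (i : Fin (2 * n)) (y : Fin (2 * n + 1) → ℝ) :
    Xvec n i y (Fin.last (2 * n)) = if h : (i : ℕ) < n then y ⟨n + i, by omega⟩ else 0 := by
  rw [Xvec_eq, Pi.add_apply, Pi.smul_apply]
  simp

theorem Xvec_castSucc (i k : Fin (2 * n)) (y : Fin (2 * n + 1) → ℝ) :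
    Xvec n i y k.castSucc = (Pi.single i 1 : Fin (2 * n) → ℝ) k := by
  rw [Xvec_eq, Pi.add_apply, Pi.smul_apply]
  simp [Pi.single_apply]

theorem eta0_eq_sub_sum_Xvec_last (y v : Fin (2 * n + 1) → ℝ) :
    eta0 n y v = v (Fin.last (2 * n)) -
      ∑ i : Fin (2 * n), v i.castSucc * Xvec n i y (Fin.last (2 * n)) := by
  unfold eta0
  congr 1
  refine Fintype.sum_of_injective (Fin.castLE (by omega)) (Fin.castLE_injective _) _ _
    (fun i hi => ?_) fun j => ?_
  · have hin : ¬ (i : ℕ) < n := fun h => hi ⟨⟨i, h⟩, rfl⟩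
    rw [Xvec_last, dif_neg hin, mul_zero]
  · rw [Xvec_last, dif_pos (by simp), mul_comm]
    rfl

theorem sum_smul_Xvec_add_eta0_smul (y v : Fin (2 * n + 1) → ℝ) :
    ∑ i : Fin (2 * n), v i.castSucc • Xvec n i y +
      eta0 n y v • Pi.single (Fin.last (2 * n)) 1 = v := by
  ext k
  induction k using Fin.lastCases with
  | last => simp [eta0_eq_sub_sum_Xvec_last]
  | cast k => simp [Xvec_castSucc, Pi.single_apply]

theorem eta0_Xvec (j : Fin (2 * n)) (y : Fin (2 * n + 1) → ℝ) : eta0 n y (Xvec n j y) = 0 := by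
  simp [eta0_eq_sub_sum_Xvec_last, Xvec_castSucc, Pi.single_apply]

theorem contDiff_Xvec (j : Fin (2 * n)) {k : WithTop ℕ∞} : ContDiff ℝ k (Xvec n j) := by
  unfold Xvec
  split_ifs <;> fun_prop

end HorizontalFrame

section HorizontalDerivative

variable {n s : ℕ} {D : Set (Fin (2 * n + 1) → ℝ)}

theorem contDiffOn_hDeriv (hD : IsOpen D) {f : (Fin (2 * n + 1) → ℝ) → E}
    (hf : ContDiffOn ℝ (s + 1 : ℕ) f D) (j : Fin (2 * n)) : ContDiffOn ℝ s (hDeriv n j f) D :=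
  (hf.fderiv_of_isOpen hD (by simp)).clm_apply (contDiff_Xvec j).contDiffOn

theorem contDiffOn_XI (hD : IsOpen D) {f : (Fin (2 * n + 1) → ℝ) → E} (I : List (Fin (2 * n)))
    (hf : ContDiffOn ℝ (s + I.length : ℕ) f D) : ContDiffOn ℝ s (XI n I f) D := by
  induction I generalizing s with
  | nil => exact hf
  | cons j I ih =>
    exact contDiffOn_hDeriv hD (ih (by rwa [add_right_comm])) j

theorem XI_append_singleton (I : List (Fin (2 * n))) (j : Fin (2 * n))
    (f : (Fin (2 * n + 1) → ℝ) → E) : XI n (I ++ [j]) f = XI n I (hDeriv n j f) := by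
  induction I with
  | nil => rfl
  | cons i I ih => exact congrArg (hDeriv n i) ih

theorem ContDiffBddOn.hDeriv (hD : IsOpen D) (hDb : IsBounded D) {f : (Fin (2 * n + 1) → ℝ) → E}
    (hf : ContDiffBddOn (s + 1) f D) (j : Fin (2 * n)) : ContDiffBddOn s (hDeriv n j f) D :=
  (hf.fderiv hD).clm_apply hD (.of_contDiffOn_closure hD hDb (contDiff_Xvec j).contDiffOn)

theorem eqOn_hDeriv (hD : IsOpen D) {f g : (Fin (2 * n + 1) → ℝ) → E} (hfg : Set.EqOn f g D)
    (j : Fin (2 * n)) : Set.EqOn (hDeriv n j f) (hDeriv n j g) D := fun x hx => by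
  rw [hDeriv, (hfg.eventuallyEq_of_mem (hD.mem_nhds hx)).fderiv_eq, hDeriv]

theorem hDeriv_sum {ι : Type*} (T : Finset ι) {g : ι → (Fin (2 * n + 1) → ℝ) → E}
    {x : Fin (2 * n + 1) → ℝ} (hg : ∀ i ∈ T, DifferentiableAt ℝ (g i) x) (j : Fin (2 * n)) :
    hDeriv n j (fun y => ∑ i ∈ T, g i y) x = ∑ i ∈ T, hDeriv n j (g i) x := by
  simp [hDeriv, fderiv_fun_sum hg]

theorem hDeriv_smul {a : (Fin (2 * n + 1) → ℝ) → ℝ} {g : (Fin (2 * n + 1) → ℝ) → E}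
    {x : Fin (2 * n + 1) → ℝ} (ha : DifferentiableAt ℝ a x) (hg : DifferentiableAt ℝ g x)
    (j : Fin (2 * n)) :
    hDeriv n j (fun y => a y • g y) x = hDeriv n j a x • g x + a x • hDeriv n j g x := by
  simp [hDeriv, fderiv_fun_smul ha hg, add_comm]

/-- `F` preserves the contact structure on `D`: it pulls `η₀` back to a multiple of itself. It is
meant for `F` differentiable on `D`: where `F` is not differentiable, the condition is void. -/
def IsContactMapOn (n : ℕ) (F : (Fin (2 * n + 1) → ℝ) → (Fin (2 * n + 1) → ℝ))
    (D : Set (Fin (2 * n + 1) → ℝ)) : Prop :=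
  ∀ x ∈ D, ∃ lam : ℝ, ∀ v, eta0 n (F x) (fderiv ℝ F x v) = lam * eta0 n x v

theorem IsContactMapOn.hDeriv_eq_sum {F : (Fin (2 * n + 1) → ℝ) → (Fin (2 * n + 1) → ℝ)}
    (hF : IsContactMapOn n F D) {x : Fin (2 * n + 1) → ℝ} (hx : x ∈ D) (j : Fin (2 * n)) :
    hDeriv n j F x = ∑ i : Fin (2 * n), hDeriv n j F x i.castSucc • Xvec n i (F x) := by
  obtain ⟨lam, hlam⟩ := hF x hx
  have hhor : eta0 n (F x) (hDeriv n j F x) = 0 := by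
    rw [hDeriv, hlam, eta0_Xvec, mul_zero]
  conv_lhs => rw [← sum_smul_Xvec_add_eta0_smul (F x) (hDeriv n j F x), hhor, zero_smul, add_zero]

theorem IsContactMapOn.hDeriv_comp {F : (Fin (2 * n + 1) → ℝ) → (Fin (2 * n + 1) → ℝ)}
    (hF : IsContactMapOn n F D) {f : (Fin (2 * n + 1) → ℝ) → E}
    {x : Fin (2 * n + 1) → ℝ} (hx : x ∈ D) (hFx : DifferentiableAt ℝ F x)
    (hf : DifferentiableAt ℝ f (F x)) (j : Fin (2 * n)) :
    hDeriv n j (f ∘ F) x =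
      ∑ i : Fin (2 * n), hDeriv n j F x i.castSucc • hDeriv n i f (F x) := by
  calc hDeriv n j (f ∘ F) x = fderiv ℝ f (F x) (hDeriv n j F x) := by
        rw [hDeriv, fderiv_comp x hf hFx]; rfl
    _ = ∑ i : Fin (2 * n), hDeriv n j F x i.castSucc • hDeriv n i f (F x) := by
        conv_lhs => rw [hF.hDeriv_eq_sum hx j, map_sum]
        simp only [map_smul, hDeriv]

end HorizontalDerivative

section FollandStein

variable {n s : ℕ} {D : Set (Fin (2 * n + 1) → ℝ)}

/-- The squared Folland–Stein norm with values in `[0, ∞]`. Unlike `fsNormSq` it is not subject to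
the convention that non-integrable functions have integral zero. -/
def fsENormSq (n : ℕ) (D : Set (Fin (2 * n + 1) → ℝ)) (s : ℕ)
    (f : (Fin (2 * n + 1) → ℝ) → E) : ℝ≥0∞ :=
  ∑ t ∈ Finset.range (s + 1), ∑ I : Fin t → Fin (2 * n), ∫⁻ x in D, ‖XI n (List.ofFn I) f x‖ₑ ^ 2

theorem fsENormSq_zero (f : (Fin (2 * n + 1) → ℝ) → E) :
    fsENormSq n D 0 f = ∫⁻ x in D, ‖f x‖ₑ ^ 2 := by
  simp [fsENormSq, XI]

theorem fsENormSq_succ (f : (Fin (2 * n + 1) → ℝ) → E) :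
    fsENormSq n D (s + 1) f =
      (∫⁻ x in D, ‖f x‖ₑ ^ 2) + ∑ j : Fin (2 * n), fsENormSq n D s (hDeriv n j f) := by
  have hsnoc (t : ℕ) : ∑ I : Fin (t + 1) → Fin (2 * n), ∫⁻ x in D, ‖XI n (List.ofFn I) f x‖ₑ ^ 2 =
      ∑ j : Fin (2 * n), ∑ I : Fin t → Fin (2 * n),
        ∫⁻ x in D, ‖XI n (List.ofFn I) (hDeriv n j f) x‖ₑ ^ 2 := by
    rw [← (Fin.snocEquiv fun _ => Fin (2 * n)).sum_comp, Fintype.sum_prod_type]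
    simp only [Fin.snocEquiv_apply, List.ofFn_succ_last, Fin.snoc_castSucc, Fin.snoc_last,
      XI_append_singleton]
  simp only [fsENormSq, Finset.sum_range_succ' _ (s + 1), hsnoc]
  rw [Finset.sum_comm, add_comm]
  simp [XI]

theorem lintegral_enorm_sq_le_fsENormSq (s : ℕ) (f : (Fin (2 * n + 1) → ℝ) → E) :
    ∫⁻ x in D, ‖f x‖ₑ ^ 2 ≤ fsENormSq n D s f := by
  cases s with
  | zero => exact (fsENormSq_zero f).ge
  | succ s => exact le_self_add.trans_eq (fsENormSq_succ f).symm

theorem fsENormSq_hDeriv_le (f : (Fin (2 * n + 1) → ℝ) → E) (j : Fin (2 * n)) :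
    fsENormSq n D s (hDeriv n j f) ≤ fsENormSq n D (s + 1) f := by
  rw [fsENormSq_succ]
  exact (Finset.single_le_sum_of_canonicallyOrdered
    (f := fun j => fsENormSq n D s (hDeriv n j f)) (Finset.mem_univ j)).trans le_add_self

theorem fsENormSq_le_succ (f : (Fin (2 * n + 1) → ℝ) → E) :
    fsENormSq n D s f ≤ fsENormSq n D (s + 1) f :=
  Finset.sum_le_sum_of_subset (by gcongr; simp)

theorem fsENormSq_succ_le_mul {f : (Fin (2 * n + 1) → ℝ) → E} {K : ℝ≥0} {C : Fin (2 * n) → ℝ≥0}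
    {B : ℝ≥0∞} (hK : ∫⁻ x in D, ‖f x‖ₑ ^ 2 ≤ K * B)
    (hC : ∀ j, fsENormSq n D s (hDeriv n j f) ≤ C j * B) :
    fsENormSq n D (s + 1) f ≤ ((K + ∑ j, C j : ℝ≥0) : ℝ≥0∞) * B := by
  rw [fsENormSq_succ]
  push_cast
  rw [add_mul, Finset.sum_mul]
  gcongr with j
  exact hC j

theorem fsENormSq_congr (hD : IsOpen D) {f g : (Fin (2 * n + 1) → ℝ) → E} (hfg : Set.EqOn f g D) :
    fsENormSq n D s f = fsENormSq n D s g := by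
  have hint (f g : (Fin (2 * n + 1) → ℝ) → E) (hfg : Set.EqOn f g D) :
      ∫⁻ x in D, ‖f x‖ₑ ^ 2 = ∫⁻ x in D, ‖g x‖ₑ ^ 2 :=
    setLIntegral_congr_fun hD.measurableSet fun x hx => by rw [hfg hx]
  induction s generalizing f g with
  | zero => simp only [fsENormSq_zero, hint f g hfg]
  | succ s ih => simp only [fsENormSq_succ, hint f g hfg, fun j => ih (eqOn_hDeriv hD hfg j)]

theorem fsENormSq_sum_le (hD : IsOpen D) {ι : Type*} (T : Finset ι)
    {g : ι → (Fin (2 * n + 1) → ℝ) → E} (hg : ∀ i ∈ T, ContDiffOn ℝ s (g i) D) :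
    fsENormSq n D s (fun x => ∑ i ∈ T, g i x) ≤
      (T.card : ℝ≥0) * ∑ i ∈ T, fsENormSq n D s (g i) := by
  have hint (g : ι → (Fin (2 * n + 1) → ℝ) → E) (hg : ∀ i ∈ T, ContinuousOn (g i) D) :
      ∫⁻ x in D, ‖∑ i ∈ T, g i x‖ₑ ^ 2 ≤
        (T.card : ℝ≥0) * ∑ i ∈ T, ∫⁻ x in D, ‖g i x‖ₑ ^ 2 := by
    have hmeas (i) (hi : i ∈ T) : AEMeasurable (fun x => ‖g i x‖ₑ ^ 2) (volume.restrict D) :=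
      ((ENNReal.continuous_pow 2).comp_continuousOn (hg i hi).enorm).aemeasurable hD.measurableSet
    rw [← lintegral_finsetSum' _ hmeas, ← lintegral_const_mul' _ _ ENNReal.coe_ne_top]
    exact lintegral_mono fun x => enorm_sum_sq_le_card_mul T _
  induction s generalizing g with
  | zero =>
    simpa only [fsENormSq_zero] using hint g fun i hi => (hg i hi).continuousOn
  | succ s ih =>
    have hderiv (j : Fin (2 * n)) : Set.EqOn (hDeriv n j fun x => ∑ i ∈ T, g i x)
        (fun x => ∑ i ∈ T, hDeriv n j (g i) x) D := fun x hx =>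
      hDeriv_sum T (fun i hi =>
        ((hg i hi).differentiableOn (by simp)).differentiableAt (hD.mem_nhds hx)) j
    simp only [fsENormSq_succ, Finset.sum_add_distrib, mul_add]
    rw [Finset.sum_comm, Finset.mul_sum (s := Finset.univ)]
    gcongr with j
    · exact hint g fun i hi => (hg i hi).continuousOn
    · rw [fsENormSq_congr hD (hderiv j)]
      exact ih fun i hi => contDiffOn_hDeriv hD (hg i hi) j

theorem fsENormSq_add_le (hD : IsOpen D) {f g : (Fin (2 * n + 1) → ℝ) → E}
    (hf : ContDiffOn ℝ s f D) (hg : ContDiffOn ℝ s g D) :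
    fsENormSq n D s (fun x => f x + g x) ≤ 2 * (fsENormSq n D s f + fsENormSq n D s g) := by
  simpa using fsENormSq_sum_le hD Finset.univ (g := ![f, g]) (by simp [Fin.forall_fin_two, hf, hg])

theorem exists_fsENormSq_smul_le (hD : IsOpen D) (hDb : IsBounded D)
    {a : (Fin (2 * n + 1) → ℝ) → ℝ} (ha : ContDiffBddOn s a D) :
    ∃ C : ℝ≥0, ∀ g : (Fin (2 * n + 1) → ℝ) → E, ContDiffOn ℝ s g D →
      fsENormSq n D s (fun x => a x • g x) ≤ C * fsENormSq n D s g := by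
  induction s generalizing a with
  | zero =>
    obtain ⟨A, hA⟩ := ha.exists_setLIntegral_enorm_smul_sq_le (W := E) hD.measurableSet volume
    exact ⟨A, fun g _ => by simpa only [fsENormSq_zero] using hA g⟩
  | succ s ih =>
    obtain ⟨A, hA⟩ := ha.exists_setLIntegral_enorm_smul_sq_le (W := E) hD.measurableSet volume
    have ha' : ContDiffBddOn s a D := ha.of_le s.le_succ
    have haj (j : Fin (2 * n)) : ContDiffBddOn s (hDeriv n j a) D := ha.hDeriv hD hDb j
    obtain ⟨C', hC'⟩ := ih ha'
    choose C hC using fun j => ih (haj j)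
    refine ⟨A + ∑ j, 2 * (C j + C'), fun g hg => fsENormSq_succ_le_mul
      ((hA g).trans (by gcongr; exact lintegral_enorm_sq_le_fsENormSq _ g)) fun j => ?_⟩
    have hg' : ContDiffOn ℝ s g D := hg.of_le (by simp)
    have hgj : ContDiffOn ℝ s (hDeriv n j g) D := contDiffOn_hDeriv hD hg j
    have hleibniz : Set.EqOn (hDeriv n j fun x => a x • g x)
        (fun x => hDeriv n j a x • g x + a x • hDeriv n j g x) D := fun x hx =>
      hDeriv_smul ((ha.1.differentiableOn (by simp)).differentiableAt (hD.mem_nhds hx))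
        ((hg.differentiableOn (by simp)).differentiableAt (hD.mem_nhds hx)) j
    calc fsENormSq n D s (hDeriv n j fun x => a x • g x)
        = fsENormSq n D s (fun x => hDeriv n j a x • g x + a x • hDeriv n j g x) :=
          fsENormSq_congr hD hleibniz
      _ ≤ 2 * (fsENormSq n D s (fun x => hDeriv n j a x • g x) +
            fsENormSq n D s (fun x => a x • hDeriv n j g x)) :=
          fsENormSq_add_le hD ((contDiffOn_hDeriv hD ha.1 j).smul hg') (ha'.1.smul hgj)
      _ ≤ 2 * (C j * fsENormSq n D (s + 1) g + C' * fsENormSq n D (s + 1) g) := by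
          gcongr
          · exact (hC j g hg').trans (by gcongr; exact fsENormSq_le_succ g)
          · exact (hC' _ hgj).trans (by gcongr; exact fsENormSq_hDeriv_le g j)
      _ = ((2 * (C j + C') : ℝ≥0) : ℝ≥0∞) * fsENormSq n D (s + 1) g := by
          push_cast
          ring

theorem exists_fsENormSq_comp_le {D' : Set (Fin (2 * n + 1) → ℝ)} (hD : IsOpen D)
    (hDb : IsBounded D) (hD' : IsOpen D') {F : (Fin (2 * n + 1) → ℝ) → (Fin (2 * n + 1) → ℝ)}
    (hF : ContDiffBddOn (s + 1) F D) (hFD : Set.MapsTo F D D') (hFc : IsContactMapOn n F D)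
    {M : ℝ≥0} (hM : ∀ g : (Fin (2 * n + 1) → ℝ) → ℝ≥0∞,
      ∫⁻ x in D, g (F x) ≤ M * ∫⁻ y in D', g y) :
    ∃ C : ℝ≥0, ∀ f : (Fin (2 * n + 1) → ℝ) → E, ContDiffOn ℝ s f D' →
      fsENormSq n D s (f ∘ F) ≤ C * fsENormSq n D' s f := by
  have hint (f : (Fin (2 * n + 1) → ℝ) → E) :
      ∫⁻ x in D, ‖(f ∘ F) x‖ₑ ^ 2 ≤ M * ∫⁻ y in D', ‖f y‖ₑ ^ 2 := hM fun y => ‖f y‖ₑ ^ 2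
  induction s with
  | zero => exact ⟨M, fun f _ => by simpa only [fsENormSq_zero] using hint f⟩
  | succ s ih =>
    obtain ⟨C, hC⟩ := ih (hF.of_le (s + 1).le_succ)
    let a (j i : Fin (2 * n)) (x : Fin (2 * n + 1) → ℝ) : ℝ := hDeriv n j F x i.castSucc
    have ha (j i : Fin (2 * n)) : ContDiffBddOn s (a j i) D :=
      ((hF.hDeriv hD hDb j).of_le s.le_succ).continuousLinearMap_comp
        (ContinuousLinearMap.proj i.castSucc) hD
    choose A hA using fun j i => exists_fsENormSq_smul_le (E := E) hD hDb (ha j i)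
    refine ⟨M + ∑ j, 2 * n * ∑ i, A j i * C, fun f hf => fsENormSq_succ_le_mul
      ((hint f).trans (by gcongr; exact lintegral_enorm_sq_le_fsENormSq _ f)) fun j => ?_⟩
    have hfi (i : Fin (2 * n)) : ContDiffOn ℝ s (hDeriv n i f ∘ F) D :=
      (contDiffOn_hDeriv hD' hf i).comp (hF.1.of_le (by norm_cast; omega)) hFD
    have hchain : Set.EqOn (hDeriv n j (f ∘ F))
        (fun x => ∑ i, a j i x • (hDeriv n i f ∘ F) x) D := fun x hx =>
      hFc.hDeriv_comp hx ((hF.1.differentiableOn (by simp)).differentiableAt (hD.mem_nhds hx))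
        ((hf.differentiableOn (by simp)).differentiableAt (hD'.mem_nhds (hFD hx))) j
    calc fsENormSq n D s (hDeriv n j (f ∘ F))
        = fsENormSq n D s (fun x => ∑ i, a j i x • (hDeriv n i f ∘ F) x) :=
          fsENormSq_congr hD hchain
      _ ≤ (2 * n : ℝ≥0) * ∑ i, fsENormSq n D s (fun x => a j i x • (hDeriv n i f ∘ F) x) := by
          simpa using fsENormSq_sum_le hD Finset.univ
            (g := fun i x => a j i x • (hDeriv n i f ∘ F) x) fun i _ => (ha j i).1.smul (hfi i)
      _ ≤ (2 * n : ℝ≥0) * ∑ i, A j i * (C * fsENormSq n D' (s + 1) f) := by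
          gcongr with i
          refine (hA j i _ (hfi i)).trans ?_
          gcongr
          refine (hC _ (contDiffOn_hDeriv hD' hf i)).trans ?_
          gcongr
          exact fsENormSq_hDeriv_le f i
      _ = ((2 * n * ∑ i, A j i * C : ℝ≥0) : ℝ≥0∞) * fsENormSq n D' (s + 1) f := by
          push_cast
          simp only [← mul_assoc, ← Finset.sum_mul]

theorem ContDiffBddOn.fsENormSq_ne_top (hD : IsOpen D) (hDb : IsBounded D)
    {f : (Fin (2 * n + 1) → ℝ) → E} (hf : ContDiffBddOn s f D) : fsENormSq n D s f ≠ ∞ := by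
  induction s generalizing f with
  | zero =>
    rw [fsENormSq_zero]
    exact hf.setLIntegral_enorm_sq_ne_top hDb.measure_lt_top.ne
  | succ s ih =>
    rw [fsENormSq_succ]
    exact ENNReal.add_ne_top.2 ⟨hf.setLIntegral_enorm_sq_ne_top hDb.measure_lt_top.ne,
      ENNReal.sum_ne_top.2 fun j _ => ih (hf.hDeriv hD hDb j)⟩

theorem fsENormSq_ne_top_of_contDiffOn_closure (hD : IsOpen D) (hDb : IsBounded D)
    {f : (Fin (2 * n + 1) → ℝ) → E} (hf : ContDiffOn ℝ s f (closure D)) :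
    fsENormSq n D s f ≠ ∞ :=
  (ContDiffBddOn.of_contDiffOn_closure hD hDb hf).fsENormSq_ne_top hD hDb

theorem fsNormSq_eq_toReal (hD : IsOpen D) {f : (Fin (2 * n + 1) → ℝ) → E}
    (hf : ContDiffOn ℝ s f D) (hfin : fsENormSq n D s f ≠ ∞) :
    fsNormSq n D s f = (fsENormSq n D s f).toReal := by
  unfold fsENormSq at hfin ⊢
  rw [ENNReal.toReal_sum fun t ht => ENNReal.sum_ne_top.1 hfin t ht]
  refine Finset.sum_congr rfl fun t ht => ?_
  rw [ENNReal.toReal_sum (ENNReal.sum_ne_top.1 (ENNReal.sum_ne_top.1 hfin t ht))]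
  refine Finset.sum_congr rfl fun I _ => ?_
  have hts : t ≤ s := Finset.mem_range_succ_iff.1 ht
  have hcont : ContinuousOn (XI n (List.ofFn I) f) D :=
    (contDiffOn_XI (s := 0) hD _ (hf.of_le (by simpa using hts))).continuousOn
  rw [integral_eq_lintegral_of_nonneg_ae (.of_forall fun x => by positivity)
    (ContinuousOn.aestronglyMeasurable (by fun_prop) hD.measurableSet)]
  simp only [ENNReal.ofReal_pow (norm_nonneg _), ofReal_norm]

theorem fsNorm_le_mul (hD : IsOpen D) {D' : Set (Fin (2 * n + 1) → ℝ)} (hD' : IsOpen D')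
    {f g : (Fin (2 * n + 1) → ℝ) → E} (hf : ContDiffOn ℝ s f D) (hg : ContDiffOn ℝ s g D')
    (hfin : fsENormSq n D' s g ≠ ∞) {C : ℝ≥0}
    (hC : fsENormSq n D s f ≤ C * fsENormSq n D' s g) :
    fsNorm n D s f ≤ √C * fsNorm n D' s g := by
  have hCfin : C * fsENormSq n D' s g ≠ ∞ := ENNReal.mul_ne_top ENNReal.coe_ne_top hfin
  rw [fsNorm, fsNorm, fsNormSq_eq_toReal hD hf (ne_top_of_le_ne_top hCfin hC),
    fsNormSq_eq_toReal hD' hg hfin, ← Real.sqrt_mul C.coe_nonneg]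
  gcongr
  simpa using ENNReal.toReal_mono hCfin hC

end FollandStein

theorem statement8_general {n s : ℕ} {D D' : Set (Fin (2 * n + 1) → ℝ)} (hD : IsOpen D)
    (hDb : IsBounded D) (hD' : IsOpen D') (hD'b : IsBounded D')
    {F G : (Fin (2 * n + 1) → ℝ) → (Fin (2 * n + 1) → ℝ)}
    (hF : ContDiffOn ℝ (s + 1 : ℕ) F (closure D)) (hFbij : Set.BijOn F D D')
    (hG : ContDiffOn ℝ 1 G (closure D')) (hGF : Set.LeftInvOn G F D) (hFc : IsContactMapOn n F D) :
    ∃ C > (0 : ℝ), ∀ f : (Fin (2 * n + 1) → ℝ) → E, ContDiffOn ℝ s f D' → fsENormSq n D' s f ≠ ∞ →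
      fsENormSq n D s (f ∘ F) ≠ ∞ ∧ fsNorm n D s (f ∘ F) ≤ C * fsNorm n D' s f := by
  obtain ⟨M, hM⟩ := exists_setLIntegral_comp_le volume hD' hD'b hFbij hG hGF
  have hFbdd : ContDiffBddOn (s + 1) F D := .of_contDiffOn_closure hD hDb hF
  obtain ⟨C, hC⟩ := exists_fsENormSq_comp_le (E := E) hD hDb hD' hFbdd hFbij.mapsTo hFc hM
  refine ⟨√C + 1, by positivity, fun f hf hfin => ⟨?_, ?_⟩⟩
  · exact ne_top_of_le_ne_top (ENNReal.mul_ne_top ENNReal.coe_ne_top hfin) (hC f hf)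
  · have hfF : ContDiffOn ℝ s (f ∘ F) D :=
      hf.comp (hFbdd.1.of_le (by simp)) hFbij.mapsTo
    refine (fsNorm_le_mul hD hD' hfF hf hfin (hC f hf)).trans ?_
    gcongr
    · exact Real.sqrt_nonneg _
    · simp

/-- composition with a smooth contact diffeomorphism `F : cl D → cl D'`
is bounded on Folland–Stein spaces: `‖f ∘ F‖_{D,s} ≤ C ‖f‖_{D',s}`. -/
theorem statement8 (n m : ℕ) (hn : 1 ≤ n)
    (D D' : Set (Fin (2*n+1) → ℝ)) (hD : IsOpen D) (hDb : IsBounded D)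
    (hD' : IsOpen D') (hD'b : IsBounded D')
    (F : (Fin (2*n+1) → ℝ) → (Fin (2*n+1) → ℝ))
    (hFsmooth : ContDiffOn ℝ (⊤:ℕ∞) F (closure D))
    (hFbij : Set.BijOn F (closure D) (closure D'))
    (hFbij' : Set.BijOn F D D')
    (hFinv : ∃ G : (Fin (2*n+1) → ℝ) → (Fin (2*n+1) → ℝ),
      ContDiffOn ℝ (⊤:ℕ∞) G (closure D') ∧ ∀ x ∈ closure D, G (F x) = x)
    (hFcontact : ∀ x ∈ D, ∃ lam : ℝ, ∀ v : Fin (2*n+1) → ℝ,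
      eta0 n (F x) (fderiv ℝ F x v) = lam * eta0 n x v)
    (s : ℕ) :
    ∃ C > (0:ℝ), ∀ f : (Fin (2*n+1) → ℝ) → (Fin m → ℝ),
      ContDiffOn ℝ (⊤:ℕ∞) f (closure D') →
      fsNorm n D s (f ∘ F) ≤ C * fsNorm n D' s f := by
  obtain ⟨G, hG, hGF⟩ := hFinv
  obtain ⟨C, hC0, hC⟩ := statement8_general (E := Fin m → ℝ) (s := s) hD hDb hD' hD'b
    (hFsmooth.of_le (by exact_mod_cast le_top)) hFbij' (hG.of_le (by exact_mod_cast le_top))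
    (fun x hx => hGF x (subset_closure hx)) hFcontact
  refine ⟨C, hC0, fun f hf => ?_⟩
  have hfs : ContDiffOn ℝ s f (closure D') := hf.of_le (by exact_mod_cast le_top)
  exact (hC f (hfs.mono subset_closure) (fsENormSq_ne_top_of_contDiffOn_closure hD' hD'b hfs)).2

end
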